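/- Let Φ be a Leonard system with parameter array ({θ_i}; {θ*_i}; {φ_i}; {ϕ_i}). Then for 0 ≤ r ≤ d, E*_d E_0 τ*_r(A*) = (φ_1 φ_2 ⋯ φ_r / η_d(θ_0)) · E*_d η_{d−r}(A). -/

import Mathlib

open Matrix Polynomial

/-- A Leonard system in the matrix algebra `Mat_{d+1}(K)`: multiplicity-free
elements `A`, `Astar` with orderings `E`, `Estar` of their primitive idempotents
satisfying the irreducible-tridiagonality conditions. -/
structure LeonardSystem (K : Type*) [Field K] (d : ℕ) where
  A : Matrix (Fin (d+1)) (Fin (d+1)) K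
  Astar : Matrix (Fin (d+1)) (Fin (d+1)) K
  E : Fin (d+1) → Matrix (Fin (d+1)) (Fin (d+1)) K
  Estar : Fin (d+1) → Matrix (Fin (d+1)) (Fin (d+1)) K
  θ : Fin (d+1) → K
  θs : Fin (d+1) → K
  θ_inj : Function.Injective θ
  θs_inj : Function.Injective θs
  E_ne : ∀ i, E i ≠ 0
  Es_ne : ∀ i, Estar i ≠ 0
  E_mul : ∀ i j, E i * E j = if i = j then E i else 0
  Es_mul : ∀ i j, Estar i * Estar j = if i = j then Estar i else 0
  E_sum : ∑ i, E i = 1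
  Es_sum : ∑ i, Estar i = 1
  A_eq : A = ∑ i, θ i • E i
  As_eq : Astar = ∑ i, θs i • Estar i
  trid0 : ∀ i j : Fin (d+1), ((i : ℤ) - (j : ℤ)).natAbs > 1 → E i * Astar * E j = 0
  trid1 : ∀ i j : Fin (d+1), ((i : ℤ) - (j : ℤ)).natAbs = 1 → E i * Astar * E j ≠ 0
  strid0 : ∀ i j : Fin (d+1), ((i : ℤ) - (j : ℤ)).natAbs > 1 → Estar i * A * Estar j = 0
  strid1 : ∀ i j : Fin (d+1), ((i : ℤ) - (j : ℤ)).natAbs = 1 → Estar i * A * Estar j ≠ 0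

namespace LeonardSystem

variable {K : Type*} [Field K] {d : ℕ}

/-- Eigenvalues indexed by `ℕ` (junk value outside range). -/
def θN (L : LeonardSystem K d) (i : ℕ) : K := if h : i < d + 1 then L.θ ⟨i, h⟩ else 0

def θsN (L : LeonardSystem K d) (i : ℕ) : K := if h : i < d + 1 then L.θs ⟨i, h⟩ else 0

/-- `τ_i(A) = (A-θ₀)(A-θ₁)⋯(A-θ_{i-1})`. -/
def tauA (L : LeonardSystem K d) : ℕ → Matrix (Fin (d+1)) (Fin (d+1)) K
  | 0 => 1
  | i + 1 => L.tauA i * (L.A - L.θN i • 1)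

/-- `η_i(A) = (A-θ_d)(A-θ_{d-1})⋯(A-θ_{d-i+1})`. -/
def etaA (L : LeonardSystem K d) : ℕ → Matrix (Fin (d+1)) (Fin (d+1)) K
  | 0 => 1
  | i + 1 => L.etaA i * (L.A - L.θN (d - i) • 1)

/-- `τ*_i(A*)`. -/
def tausA (L : LeonardSystem K d) : ℕ → Matrix (Fin (d+1)) (Fin (d+1)) K
  | 0 => 1
  | i + 1 => L.tausA i * (L.Astar - L.θsN i • 1)

/-- `η*_i(A*)`. -/
def etasA (L : LeonardSystem K d) : ℕ → Matrix (Fin (d+1)) (Fin (d+1)) K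
  | 0 => 1
  | i + 1 => L.etasA i * (L.Astar - L.θsN (d - i) • 1)

/-- Scalar `τ_i(x)`. -/
def tauS (L : LeonardSystem K d) (i : ℕ) (x : K) : K := ∏ j ∈ Finset.range i, (x - L.θN j)

/-- Scalar `η_i(x)`. -/
def etaS (L : LeonardSystem K d) (i : ℕ) (x : K) : K := ∏ j ∈ Finset.range i, (x - L.θN (d - j))

/-- Scalar `τ*_i(x)`. -/
def tausS (L : LeonardSystem K d) (i : ℕ) (x : K) : K := ∏ j ∈ Finset.range i, (x - L.θsN j)

/-- Scalar `η*_i(x)`. -/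
def etasS (L : LeonardSystem K d) (i : ℕ) (x : K) : K := ∏ j ∈ Finset.range i, (x - L.θsN (d - j))

/-- First split sequence `φ_i`. -/
noncomputable def varphi (L : LeonardSystem K d) (i : ℕ) : K :=
  (L.θsN 0 - L.θsN i) * (L.tauA i * L.Estar 0).trace / (L.tauA (i-1) * L.Estar 0).trace

/-- Second split sequence `ϕ_i`. -/
noncomputable def phi (L : LeonardSystem K d) (i : ℕ) : K :=
  (L.θsN 0 - L.θsN i) * (L.etaA i * L.Estar 0).trace / (L.etaA (i-1) * L.Estar 0).trace

/-- `φ₁φ₂⋯φ_r`. -/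
noncomputable def varphiProd (L : LeonardSystem K d) (r : ℕ) : K :=
  ∏ j ∈ Finset.range r, L.varphi (j + 1)

/-- `ϕ₁ϕ₂⋯ϕ_r`. -/
noncomputable def phiProd (L : LeonardSystem K d) (r : ℕ) : K :=
  ∏ j ∈ Finset.range r, L.phi (j + 1)

/-- `φ_d φ_{d-1} ⋯ φ_{d-r+1}`. -/
noncomputable def varphiRevProd (L : LeonardSystem K d) (r : ℕ) : K :=
  ∏ j ∈ Finset.range r, L.varphi (d - j)

/-- `ϕ_d ϕ_{d-1} ⋯ ϕ_{d-r+1}`. -/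
noncomputable def phiRevProd (L : LeonardSystem K d) (r : ℕ) : K :=
  ∏ j ∈ Finset.range r, L.phi (d - j)

end LeonardSystem

/-! The matrices `τ_i(A) E*_0` for `0 ≤ i ≤ d` detect zero: if `X * τ_i(A) E*_0 = 0` for all `i`,
then `X = 0`. Both sides of the identity pair with them like members of dual bases. By degree and
root counting, `E*_d η_{d-r}(A) τ_i(A) E*_0` is `0` for `i ≠ r` and `η_d(θ_0) E*_d E_0 E*_0` for
`i = r`, while `E_0 τ*_r(A*) τ_i(A) E*_0` is `0` for `i ≠ r` and `φ_1 ⋯ φ_r E_0 E*_0` for `i = r`.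
In the last case `τ*_r(A*)` may be replaced by any monic polynomial of degree `r` in `A*`; with
`(A* - θ*_1) ⋯ (A* - θ*_r)` only the `E*_0`-component of `τ_r(A) E*_0` survives, and its trace is
what the definition of `φ_i` records. -/

section Idempotents

variable {K R ι : Type*} [CommSemiring K] [Semiring R] [Algebra K R] [Fintype ι] {e : ι → R}

theorem sum_mul_idempotent_mul (he : CompleteOrthogonalIdempotents e) (x y : R) :
    ∑ k, x * e k * y = x * y := by
  rw [← Finset.sum_mul, ← Finset.mul_sum, he.complete, mul_one]

theorem aeval_sum_smul_idempotent (he : CompleteOrthogonalIdempotents e) (c : ι → K) (p : K[X]) :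
    aeval (∑ i, c i • e i) p = ∑ i, p.eval (c i) • e i := by
  classical
  have pow_eq (n : ℕ) : (∑ i, c i • e i) ^ n = ∑ i, c i ^ n • e i := by
    induction n with
    | zero => simp only [pow_zero, one_smul, he.complete]
    | succ n ih =>
      simp only [pow_succ, ih, Finset.sum_mul_sum, smul_mul_smul_comm, he.mul_eq, smul_ite,
        smul_zero, Finset.sum_ite_eq, Finset.mem_univ, if_true]
  induction p using Polynomial.induction_on' with
  | add p q hp hq => simp only [map_add, hp, hq, eval_add, add_smul, Finset.sum_add_distrib]
  | monomial n a =>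
    simp only [aeval_monomial, eval_monomial, pow_eq, ← Algebra.smul_def, Finset.smul_sum, mul_smul]

theorem idempotent_mul_aeval (he : CompleteOrthogonalIdempotents e) (c : ι → K) (p : K[X]) (j : ι) :
    e j * aeval (∑ i, c i • e i) p = p.eval (c j) • e j := by
  classical
  simp [aeval_sum_smul_idempotent he, Finset.mul_sum, he.mul_eq]

theorem aeval_mul_idempotent (he : CompleteOrthogonalIdempotents e) (c : ι → K) (p : K[X]) (j : ι) :
    aeval (∑ i, c i • e i) p * e j = p.eval (c j) • e j := by
  classical
  simp [aeval_sum_smul_idempotent he, Finset.sum_mul, he.mul_eq]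

end Idempotents

section PrimitiveIdempotents

variable {K ι : Type*} [Field K] [Fintype ι] [DecidableEq ι] {e : ι → Matrix ι ι K}

theorem exists_basis_idempotent_mulVec (he : OrthogonalIdempotents e) (hne : ∀ i, e i ≠ 0) :
    ∃ b : Module.Basis ι K (ι → K), ∀ i j, e i *ᵥ b j = if i = j then b j else 0 := by
  classical
  have exists_fixed (i : ι) : ∃ v, v ≠ 0 ∧ e i *ᵥ v = v := by
    obtain ⟨w, hw⟩ : ∃ w, e i *ᵥ w ≠ 0 := by
      by_contra! h
      exact hne i (Matrix.ext_of_mulVec_single fun k => by rw [h, zero_mulVec])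
    exact ⟨e i *ᵥ w, hw, by rw [mulVec_mulVec, (he.idem i).eq]⟩
  choose v v_ne v_fixed using exists_fixed
  have mulVec_v (i j : ι) : e i *ᵥ v j = if i = j then v j else 0 := by
    rw [← v_fixed j, mulVec_mulVec, he.mul_eq]
    split_ifs with h
    · rw [h]
    · exact zero_mulVec _
  have v_indep : LinearIndependent K v := by
    refine Fintype.linearIndependent_iff.mpr fun g hg j => ?_
    have : g j • v j = 0 := by
      simpa [mulVec_sum, mulVec_smul, mulVec_v] using congrArg (e j *ᵥ ·) hg
    exact (smul_eq_zero.mp this).resolve_right (v_ne j)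
  exact ⟨basisOfPiSpaceOfLinearIndependent v_indep, by simpa using mulVec_v⟩

theorem exists_idempotent_eq_vecMulVec (he : OrthogonalIdempotents e) (hne : ∀ i, e i ≠ 0) (i : ι) :
    ∃ v w, e i = vecMulVec v w := by
  obtain ⟨b, hb⟩ := exists_basis_idempotent_mulVec he hne
  have mulVec_eq (x : ι → K) : e i *ᵥ x = b.repr x i • b i := by
    conv_lhs => rw [← b.sum_repr x]
    simp only [mulVec_sum, mulVec_smul, hb, smul_ite, smul_zero, Finset.sum_ite_eq,
      Finset.mem_univ, if_true]
  refine ⟨b i, fun k => b.repr (Pi.single k 1) i, Matrix.ext_of_mulVec_single fun k => ?_⟩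
  rw [mulVec_eq, vecMulVec_mulVec]
  simp

theorem idempotent_mul_mul_idempotent (he : OrthogonalIdempotents e) (hne : ∀ i, e i ≠ 0) (i : ι)
    (M : Matrix ι ι K) : e i * M * e i = (M * e i).trace • e i := by
  obtain ⟨v, w, h⟩ := exists_idempotent_eq_vecMulVec he hne i
  rw [h, vecMulVec_mul, vecMulVec_mul_vecMulVec, mul_vecMulVec, trace_vecMulVec,
    ← dotProduct_mulVec, dotProduct_comm w, vecMulVec_smul]

theorem trace_idempotent (he : OrthogonalIdempotents e) (hne : ∀ i, e i ≠ 0) (i : ι) :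
    (e i).trace = 1 := by
  have h : (1 : K) • e i = (e i).trace • e i := by
    simpa [(he.idem i).eq] using idempotent_mul_mul_idempotent he hne i 1
  exact (smul_left_injective K (hne i) h).symm

theorem mul_idempotent_mul_ne_zero (he : OrthogonalIdempotents e) (hne : ∀ i, e i ≠ 0) (i : ι)
    {X Y : Matrix ι ι K} (hX : X * e i ≠ 0) (hY : e i * Y ≠ 0) : X * e i * Y ≠ 0 := by
  obtain ⟨v, w, h⟩ := exists_idempotent_eq_vecMulVec he hne i
  rw [h, mul_vecMulVec] at hX
  rw [h, vecMulVec_mul] at hY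
  rw [h, mul_vecMulVec, vecMulVec_mul]
  simp_all

end PrimitiveIdempotents

/-- `B` acts tridiagonally on the decomposition given by the idempotents `e`. The distance is
spelled `((i : ℤ) - j).natAbs`, as in `LeonardSystem`. -/
def IsTridiagonal {R : Type*} [Semiring R] {n : ℕ} (e : Fin n → R) (B : R) : Prop :=
  ∀ i j : Fin n, ((i : ℤ) - (j : ℤ)).natAbs > 1 → e i * B * e j = 0

namespace IsTridiagonal

section Semiring

variable {K R : Type*} [CommSemiring K] [Semiring R] [Algebra K R] {n : ℕ} {e : Fin n → R} {B : R}

theorem mul_pow_mul_eq_zero (hB : IsTridiagonal e B) (he : CompleteOrthogonalIdempotents e) {m : ℕ}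
    {i j : Fin n} (h : m < ((i : ℤ) - (j : ℤ)).natAbs) : e i * B ^ m * e j = 0 := by
  induction m generalizing j with
  | zero =>
    rw [pow_zero, mul_one]
    exact he.ortho (by rintro rfl; simp at h)
  | succ m ih =>
    rw [pow_succ, ← mul_assoc, mul_assoc, ← sum_mul_idempotent_mul he]
    refine Finset.sum_eq_zero fun k _ => ?_
    by_cases hk : ((k : ℤ) - (j : ℤ)).natAbs > 1
    · rw [mul_assoc, ← mul_assoc (e k), hB k j hk, mul_zero]
    · rw [ih (by omega), zero_mul]

theorem mul_aeval_mul (hB : IsTridiagonal e B) (he : CompleteOrthogonalIdempotents e) {p : K[X]}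
    {m : ℕ} {i j : Fin n} (hp : p.natDegree ≤ m) (h : m ≤ ((i : ℤ) - (j : ℤ)).natAbs) :
    e i * aeval B p * e j = p.coeff m • (e i * B ^ m * e j) := by
  rw [aeval_eq_sum_range' (Nat.lt_succ_of_le hp), Finset.mul_sum, Finset.sum_mul,
    Finset.sum_range_succ, Finset.sum_eq_zero, zero_add, mul_smul_comm, smul_mul_assoc]
  intro k hk
  have k_lt : k < ((i : ℤ) - (j : ℤ)).natAbs := (Finset.mem_range.mp hk).trans_le h
  rw [mul_smul_comm, smul_mul_assoc, hB.mul_pow_mul_eq_zero he k_lt, smul_zero]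

theorem mul_aeval_mul_eq_zero (hB : IsTridiagonal e B) (he : CompleteOrthogonalIdempotents e)
    {p : K[X]} {i j : Fin n} (hp : p.natDegree < ((i : ℤ) - (j : ℤ)).natAbs) :
    e i * aeval B p * e j = 0 := by
  rw [hB.mul_aeval_mul he hp.le le_rfl, coeff_eq_zero_of_natDegree_lt hp, zero_smul]

end Semiring

section Matrix

variable {K : Type*} [Field K] {n : ℕ}

theorem mul_pow_mul_ne_zero {e : Fin n → Matrix (Fin n) (Fin n) K} {B : Matrix (Fin n) (Fin n) K}
    (hB : IsTridiagonal e B) (he : CompleteOrthogonalIdempotents e) (hne : ∀ i, e i ≠ 0)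
    (hirr : ∀ i j : Fin n, ((i : ℤ) - (j : ℤ)).natAbs = 1 → e i * B * e j ≠ 0) {m : ℕ}
    {i j : Fin n} (h : ((i : ℤ) - (j : ℤ)).natAbs = m) : e i * B ^ m * e j ≠ 0 := by
  induction m generalizing j with
  | zero =>
    obtain rfl : i = j := by omega
    simpa [(he.idem i).eq] using hne i
  | succ m ih =>
    obtain ⟨k, k_adj, k_dist⟩ : ∃ k : Fin n,
        ((k : ℤ) - (j : ℤ)).natAbs = 1 ∧ ((i : ℤ) - (k : ℤ)).natAbs = m := by
      rcases lt_or_ge i j with hij | hij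
      · exact ⟨⟨j - 1, by omega⟩, by simp only; omega, by simp only; omega⟩
      · exact ⟨⟨j + 1, by omega⟩, by simp only; omega, by simp only; omega⟩
    rw [pow_succ, ← mul_assoc, mul_assoc, ← sum_mul_idempotent_mul he, Finset.sum_eq_single k]
    · refine mul_idempotent_mul_ne_zero he.toOrthogonalIdempotents hne k (ih k_dist) ?_
      rw [← mul_assoc]
      exact hirr k j k_adj
    · intro l _ l_ne
      by_cases hl : ((l : ℤ) - (j : ℤ)).natAbs > 1
      · rw [mul_assoc, ← mul_assoc (e l), hB l j hl, mul_zero]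
      · rw [hB.mul_pow_mul_eq_zero he (by omega), zero_mul]
    · simp

theorem eq_zero_of_mul_aeval_mul_eq_zero {e : Fin (n + 1) → Matrix (Fin (n + 1)) (Fin (n + 1)) K}
    {B : Matrix (Fin (n + 1)) (Fin (n + 1)) K} (hB : IsTridiagonal e B)
    (he : CompleteOrthogonalIdempotents e) (hne : ∀ i, e i ≠ 0)
    (hirr : ∀ i j : Fin (n + 1), ((i : ℤ) - (j : ℤ)).natAbs = 1 → e i * B * e j ≠ 0)
    {p : Fin (n + 1) → K[X]} (hp : ∀ i, (p i).Monic) (hdeg : ∀ i, (p i).natDegree = i)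
    {X : Matrix (Fin (n + 1)) (Fin (n + 1)) K} (hX : ∀ i, X * aeval B (p i) * e 0 = 0) : X = 0 := by
  have X_mul (j : Fin (n + 1)) : X * e j = 0 := by
    induction j using WellFoundedLT.induction with
    | ind j ih =>
      have X_mul_mul : X * aeval B (p j) * e 0 = X * e j * (aeval B (p j) * e 0) := by
        rw [mul_assoc, ← sum_mul_idempotent_mul he, Finset.sum_eq_single j]
        · intro k _ k_ne
          rcases lt_or_gt_of_ne k_ne with hk | hk
          · rw [ih k hk, zero_mul]
          · have k_far : (p j).natDegree < ((k : ℤ) - ((0 : Fin (n + 1)) : ℕ)).natAbs := by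
              rw [hdeg, Fin.val_zero]
              omega
            rw [mul_assoc, ← mul_assoc (e k), hB.mul_aeval_mul_eq_zero he k_far, mul_zero]
        · simp
      have mul_ne_zero : e j * (aeval B (p j) * e 0) ≠ 0 := by
        rw [← mul_assoc, hB.mul_aeval_mul he (hdeg j).le (by simp), ← hdeg,
          (hp j).coeff_natDegree, one_smul]
        exact hB.mul_pow_mul_ne_zero he hne hirr (by simp [hdeg])
      by_contra X_ne
      refine mul_idempotent_mul_ne_zero he.toOrthogonalIdempotents hne j X_ne mul_ne_zero ?_
      rw [← X_mul_mul, hX]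
  rw [← mul_one X, ← he.complete, Finset.mul_sum]
  exact Finset.sum_eq_zero fun j _ => X_mul j

end Matrix

end IsTridiagonal

section Nodal

open Lagrange

theorem aeval_nodal_range_succ {K R : Type*} [CommRing K] [Ring R] [Algebra K R] (B : R) (c : ℕ → K)
    (n : ℕ) :
    aeval B (nodal (Finset.range (n + 1)) c) =
      aeval B (nodal (Finset.range n) c) * (B - c n • 1) := by
  rw [nodal_eq, Finset.prod_range_succ, map_mul, ← nodal_eq, map_sub, aeval_X, aeval_C,
    Algebra.algebraMap_eq_smul_one]

theorem nodal_range_reflect {K : Type*} [CommRing K] (c : ℕ → K) {m n : ℕ} (h : n ≤ m) :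
    nodal (Finset.range n) (fun j => c (m - j)) = nodal (Finset.Ioc (m - n) m) c := by
  refine Finset.prod_nbij' (m - ·) (m - ·) ?_ ?_ ?_ ?_ fun _ _ => rfl <;>
    · intro k hk
      simp only [Finset.mem_range, Finset.mem_Ioc] at hk ⊢
      omega

end Nodal

namespace LeonardSystem

open Lagrange

variable {K : Type*} [Field K] {d : ℕ} (L : LeonardSystem K d)

theorem complete_E : CompleteOrthogonalIdempotents L.E :=
  ⟨OrthogonalIdempotents.iff_mul_eq.mpr L.E_mul, L.E_sum⟩

theorem complete_Estar : CompleteOrthogonalIdempotents L.Estar :=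
  ⟨OrthogonalIdempotents.iff_mul_eq.mpr L.Es_mul, L.Es_sum⟩

theorem isTridiagonal_A : IsTridiagonal L.Estar L.A := L.strid0

theorem isTridiagonal_Astar : IsTridiagonal L.E L.Astar := L.trid0

theorem E_mul_aeval_A (p : K[X]) (i : Fin (d + 1)) :
    L.E i * aeval L.A p = p.eval (L.θ i) • L.E i := by
  rw [L.A_eq, idempotent_mul_aeval L.complete_E]

theorem aeval_Astar_mul_Estar (p : K[X]) (i : Fin (d + 1)) :
    aeval L.Astar p * L.Estar i = p.eval (L.θs i) • L.Estar i := by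
  rw [L.As_eq, aeval_mul_idempotent L.complete_Estar]

theorem θN_coe (i : Fin (d + 1)) : L.θN i = L.θ i := dif_pos i.2

theorem θsN_coe (i : Fin (d + 1)) : L.θsN i = L.θs i := dif_pos i.2

theorem eval_nodal_θN_eq_zero {s : Finset ℕ} {i : Fin (d + 1)} (hi : (i : ℕ) ∈ s) :
    (nodal s L.θN).eval (L.θ i) = 0 := by
  rw [← θN_coe, eval_nodal_at_node hi]

theorem eval_nodal_θsN_eq_zero {s : Finset ℕ} {i : Fin (d + 1)} (hi : (i : ℕ) ∈ s) :
    (nodal s L.θsN).eval (L.θs i) = 0 := by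
  rw [← θsN_coe, eval_nodal_at_node hi]

theorem eval_nodal_θN_ne_zero {s : Finset ℕ} {i : Fin (d + 1)} (hi : (i : ℕ) ∉ s)
    (hs : ∀ k ∈ s, k ≤ d) : (nodal s L.θN).eval (L.θ i) ≠ 0 := by
  refine eval_nodal_not_at_node fun k hk h => hi ?_
  have θ_eq : L.θ i = L.θ ⟨k, Nat.lt_succ_of_le (hs k hk)⟩ := h.trans (L.θN_coe ⟨k, _⟩)
  rwa [L.θ_inj θ_eq]

theorem tauA_eq_aeval (n : ℕ) : L.tauA n = aeval L.A (nodal (Finset.range n) L.θN) := by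
  induction n with
  | zero => simp [tauA]
  | succ n ih => rw [tauA, ih, aeval_nodal_range_succ]

theorem tausA_eq_aeval (n : ℕ) : L.tausA n = aeval L.Astar (nodal (Finset.range n) L.θsN) := by
  induction n with
  | zero => simp [tausA]
  | succ n ih => rw [tausA, ih, aeval_nodal_range_succ]

theorem etaA_eq_aeval {n : ℕ} (hn : n ≤ d) :
    L.etaA n = aeval L.A (nodal (Finset.Ioc (d - n) d) L.θN) := by
  rw [← nodal_range_reflect L.θN hn]
  clear hn
  induction n with
  | zero => simp [etaA]
  | succ n ih => rw [etaA, ih, aeval_nodal_range_succ]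

theorem etaS_self_eq_eval (x : K) : L.etaS d x = (nodal (Finset.Ioc 0 d) L.θN).eval x := by
  rw [← Nat.sub_self d, ← nodal_range_reflect L.θN le_rfl, eval_nodal, etaS]

theorem etaS_self_ne_zero : L.etaS d (L.θ 0) ≠ 0 := by
  rw [etaS_self_eq_eval]
  exact L.eval_nodal_θN_ne_zero (by simp) (by simp)

theorem aeval_A_nodal_Ioc_zero :
    aeval L.A (nodal (Finset.Ioc 0 d) L.θN) = L.etaS d (L.θ 0) • L.E 0 := by
  rw [L.A_eq, aeval_sum_smul_idempotent L.complete_E, Finset.sum_eq_single 0, etaS_self_eq_eval]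
  · intro k _ k_ne
    have k_mem : (k : ℕ) ∈ Finset.Ioc 0 d :=
      Finset.mem_Ioc.mpr ⟨Fin.pos_iff_ne_zero.mpr k_ne, k.is_le⟩
    rw [L.eval_nodal_θN_eq_zero k_mem, zero_smul]
  · simp

theorem eq_zero_of_mul_tauA_mul_Estar_zero {X : Matrix (Fin (d + 1)) (Fin (d + 1)) K}
    (hX : ∀ i : Fin (d + 1), X * L.tauA i * L.Estar 0 = 0) : X = 0 :=
  L.isTridiagonal_A.eq_zero_of_mul_aeval_mul_eq_zero L.complete_Estar L.Es_ne L.strid1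
    (fun _ => nodal_monic) (fun i => by rw [natDegree_nodal, Finset.card_range])
    (fun i => by rw [← tauA_eq_aeval, hX])

theorem E_mul_Estar_zero_ne_zero (i : Fin (d + 1)) : L.E i * L.Estar 0 ≠ 0 := by
  refine fun h => L.E_ne i (L.eq_zero_of_mul_tauA_mul_Estar_zero fun j => ?_)
  rw [tauA_eq_aeval, E_mul_aeval_A, smul_mul_assoc, h, smul_zero]

theorem E_zero_mul_aeval_mul_tauA {i : Fin (d + 1)} {p : K[X]} (hp : p.natDegree ≤ i) :
    L.E 0 * aeval L.Astar p * L.tauA i =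
      (p.coeff i * (nodal (Finset.range i) L.θN).eval (L.θ i)) •
        (L.E 0 * L.Astar ^ (i : ℕ) * L.E i) := by
  rw [tauA_eq_aeval, ← sum_mul_idempotent_mul L.complete_E, Finset.sum_eq_single i]
  · rw [mul_assoc, E_mul_aeval_A, mul_smul_comm,
      L.isTridiagonal_Astar.mul_aeval_mul L.complete_E hp (by simp), smul_smul, mul_comm]
  · intro k _ k_ne
    rcases lt_or_gt_of_ne k_ne with hk | hk
    · rw [mul_assoc, E_mul_aeval_A, L.eval_nodal_θN_eq_zero (Finset.mem_range.mpr hk), zero_smul,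
        mul_zero]
    · have k_far : p.natDegree < ((((0 : Fin (d + 1)) : ℕ) : ℤ) - (k : ℤ)).natAbs := by
        rw [Fin.val_zero]
        omega
      rw [L.isTridiagonal_Astar.mul_aeval_mul_eq_zero L.complete_E k_far, zero_mul]
  · simp

theorem aeval_mul_tauA_mul_Estar_zero {i : Fin (d + 1)} {p : K[X]}
    (hp : ∀ k : Fin (d + 1), 0 < k → k ≤ i → p.eval (L.θs k) = 0) :
    aeval L.Astar p * L.tauA i * L.Estar 0 =
      (p.eval (L.θs 0) * (L.tauA i * L.Estar 0).trace) • L.Estar 0 := by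
  rw [mul_assoc, ← sum_mul_idempotent_mul L.complete_Estar, Finset.sum_eq_single 0]
  · rw [aeval_Astar_mul_Estar, smul_mul_assoc, ← mul_assoc,
      idempotent_mul_mul_idempotent L.complete_Estar.toOrthogonalIdempotents L.Es_ne, smul_smul]
  · intro k _ k_ne
    rcases le_or_gt k i with hk | hk
    · rw [aeval_Astar_mul_Estar, hp k (Fin.pos_iff_ne_zero.mpr k_ne) hk, zero_smul, zero_mul]
    · have k_far : (nodal (Finset.range i) L.θN).natDegree <
          ((k : ℤ) - ((0 : Fin (d + 1)) : ℕ)).natAbs := by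
        rw [natDegree_nodal, Finset.card_range, Fin.val_zero]
        omega
      rw [mul_assoc, ← mul_assoc (L.Estar k), tauA_eq_aeval,
        L.isTridiagonal_A.mul_aeval_mul_eq_zero L.complete_Estar k_far, mul_zero]
  · simp

theorem E_zero_mul_aeval_mul_tauA_mul_Estar_zero (i : Fin (d + 1)) {p : K[X]} (hp : p.Monic)
    (hdeg : p.natDegree = i) :
    L.E 0 * aeval L.Astar p * L.tauA i * L.Estar 0 =
      ((nodal (Finset.Ioc 0 (i : ℕ)) L.θsN).eval (L.θs 0) * (L.tauA i * L.Estar 0).trace) •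
        (L.E 0 * L.Estar 0) := by
  set q := nodal (Finset.Ioc 0 (i : ℕ)) L.θsN with hq
  have q_deg : q.natDegree = i := by rw [hq, natDegree_nodal, Nat.card_Ioc, Nat.sub_zero]
  have q_monic : q.Monic := nodal_monic
  have coeff_eq : p.coeff i = q.coeff i := by
    rw [← hdeg, hp.coeff_natDegree, hdeg, ← q_deg, q_monic.coeff_natDegree]
  have q_root (k : Fin (d + 1)) (k_pos : 0 < k) (k_le : k ≤ i) : q.eval (L.θs k) = 0 :=
    L.eval_nodal_θsN_eq_zero (Finset.mem_Ioc.mpr ⟨k_pos, k_le⟩)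
  rw [L.E_zero_mul_aeval_mul_tauA hdeg.le, coeff_eq, ← L.E_zero_mul_aeval_mul_tauA q_deg.le,
    mul_assoc, mul_assoc, ← mul_assoc (aeval _ _), L.aeval_mul_tauA_mul_Estar_zero q_root,
    mul_smul_comm]

theorem trace_tauA_mul_Estar_zero_ne_zero (i : Fin (d + 1)) :
    (L.tauA i * L.Estar 0).trace ≠ 0 := by
  intro h
  have pairing_eq_zero :
      L.E 0 * aeval L.Astar ((X : K[X]) ^ (i : ℕ)) * L.tauA i * L.Estar 0 = 0 := by
    rw [L.E_zero_mul_aeval_mul_tauA_mul_Estar_zero i (monic_X_pow _) (natDegree_X_pow _), h,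
      mul_zero, zero_smul]
  rw [L.E_zero_mul_aeval_mul_tauA (natDegree_X_pow_le (R := K) _), coeff_X_pow_self, one_mul,
    smul_mul_assoc] at pairing_eq_zero
  refine smul_ne_zero (L.eval_nodal_θN_ne_zero (by simp) ?_) ?_ pairing_eq_zero
  · intro k hk
    have := Finset.mem_range.mp hk
    omega
  · exact mul_idempotent_mul_ne_zero L.complete_E.toOrthogonalIdempotents L.E_ne i
      (L.isTridiagonal_Astar.mul_pow_mul_ne_zero L.complete_E L.E_ne L.trid1 (by simp))
      (L.E_mul_Estar_zero_ne_zero i)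

theorem varphiProd_eq {r : ℕ} (hr : r ≤ d) :
    L.varphiProd r =
      (nodal (Finset.Ioc 0 r) L.θsN).eval (L.θs 0) * (L.tauA r * L.Estar 0).trace := by
  induction r with
  | zero =>
    simp [varphiProd, tauA, trace_idempotent L.complete_Estar.toOrthogonalIdempotents L.Es_ne]
  | succ r ih =>
    have trace_ne : (L.tauA r * L.Estar 0).trace ≠ 0 :=
      L.trace_tauA_mul_Estar_zero_ne_zero ⟨r, by omega⟩
    have θs_zero : L.θsN 0 = L.θs 0 := L.θsN_coe 0
    have varphiProd_succ : L.varphiProd (r + 1) = L.varphiProd r * L.varphi (r + 1) :=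
      Finset.prod_range_succ _ _
    rw [varphiProd_succ, ih (by omega), varphi, Nat.add_sub_cancel, θs_zero, eval_nodal, eval_nodal,
      Finset.prod_Ioc_succ_top (Nat.zero_le r)]
    field_simp

theorem E_zero_mul_tausA_mul_tauA_mul_Estar_zero (r i : Fin (d + 1)) :
    L.E 0 * L.tausA r * L.tauA i * L.Estar 0 =
      if i = r then L.varphiProd r • (L.E 0 * L.Estar 0) else 0 := by
  have natDegree_eq : (nodal (Finset.range r) L.θsN).natDegree = r := by
    rw [natDegree_nodal, Finset.card_range]
  rw [tausA_eq_aeval]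
  split_ifs with h
  · subst h
    rw [L.E_zero_mul_aeval_mul_tauA_mul_Estar_zero i nodal_monic natDegree_eq,
      L.varphiProd_eq i.is_le]
  rcases lt_or_gt_of_ne h with i_lt | r_lt
  · have τs_root (k : Fin (d + 1)) (hk : k ≤ i) :
        (nodal (Finset.range r) L.θsN).eval (L.θs k) = 0 :=
      L.eval_nodal_θsN_eq_zero (Finset.mem_range.mpr (hk.trans_lt i_lt))
    rw [mul_assoc, mul_assoc, ← mul_assoc (aeval _ _),
      L.aeval_mul_tauA_mul_Estar_zero fun k _ => τs_root k, τs_root 0 (Fin.zero_le i), zero_mul,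
      zero_smul, mul_zero]
  · have natDegree_lt : (nodal (Finset.range r) L.θsN).natDegree < i := natDegree_eq.trans_lt r_lt
    rw [L.E_zero_mul_aeval_mul_tauA natDegree_lt.le, coeff_eq_zero_of_natDegree_lt natDegree_lt,
      zero_mul, zero_smul, zero_mul]

theorem Estar_last_mul_aeval_mul_Estar_zero {p : K[X]} (hp : p.natDegree ≤ d) :
    L.Estar (Fin.last d) * aeval L.A p * L.Estar 0 =
      (p.coeff d * L.etaS d (L.θ 0)) • (L.Estar (Fin.last d) * L.E 0 * L.Estar 0) := by
  set η := nodal (Finset.Ioc 0 d) L.θN with hη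
  have η_deg : η.natDegree = d := by rw [hη, natDegree_nodal, Nat.card_Ioc, Nat.sub_zero]
  have η_coeff : η.coeff d = 1 := by
    rw [← (nodal_monic : η.Monic).coeff_natDegree, η_deg]
  have pow_d : L.Estar (Fin.last d) * L.A ^ d * L.Estar 0 =
      L.etaS d (L.θ 0) • (L.Estar (Fin.last d) * L.E 0 * L.Estar 0) := by
    rw [← smul_mul_assoc, ← mul_smul_comm, ← L.aeval_A_nodal_Ioc_zero,
      L.isTridiagonal_A.mul_aeval_mul L.complete_Estar η_deg.le (by simp), η_coeff, one_smul]
  rw [L.isTridiagonal_A.mul_aeval_mul L.complete_Estar hp (by simp), pow_d, smul_smul]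

theorem Estar_last_mul_etaA_mul_tauA_mul_Estar_zero (r i : Fin (d + 1)) :
    L.Estar (Fin.last d) * L.etaA (d - r) * L.tauA i * L.Estar 0 =
      if i = r then L.etaS d (L.θ 0) • (L.Estar (Fin.last d) * L.E 0 * L.Estar 0) else 0 := by
  set p := nodal (Finset.Ioc (r : ℕ) d) L.θN * nodal (Finset.range i) L.θN with hp
  have p_monic : p.Monic := nodal_monic.mul nodal_monic
  have p_deg : p.natDegree = d - r + i := by
    rw [hp, nodal_monic.natDegree_mul nodal_monic, natDegree_nodal, natDegree_nodal, Nat.card_Ioc,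
      Finset.card_range]
  have etaA_mul_tauA : L.etaA (d - r) * L.tauA i = aeval L.A p := by
    rw [L.etaA_eq_aeval (Nat.sub_le d r), Nat.sub_sub_self r.is_le, tauA_eq_aeval, hp, map_mul]
  rw [mul_assoc (L.Estar _), etaA_mul_tauA]
  split_ifs with h
  · subst h
    rw [Nat.sub_add_cancel i.is_le] at p_deg
    have p_coeff : p.coeff d = 1 := by simpa only [p_deg] using p_monic.coeff_natDegree
    rw [L.Estar_last_mul_aeval_mul_Estar_zero p_deg.le, p_coeff, one_mul]
  rcases lt_or_gt_of_ne h with i_lt | r_lt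
  · have p_deg_lt : p.natDegree < d := by omega
    rw [L.Estar_last_mul_aeval_mul_Estar_zero p_deg_lt.le, coeff_eq_zero_of_natDegree_lt p_deg_lt,
      zero_mul, zero_smul]
  · have p_root (k : Fin (d + 1)) : p.eval (L.θ k) = 0 := by
      rw [hp, eval_mul, mul_eq_zero]
      rcases lt_or_ge (r : ℕ) k with hk | hk
      · exact Or.inl (L.eval_nodal_θN_eq_zero (Finset.mem_Ioc.mpr ⟨hk, k.is_le⟩))
      · exact Or.inr (L.eval_nodal_θN_eq_zero (Finset.mem_range.mpr (hk.trans_lt r_lt)))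
    have aeval_p : aeval L.A p = 0 := by
      simp only [L.A_eq, aeval_sum_smul_idempotent L.complete_E, p_root, zero_smul,
        Finset.sum_const_zero]
    rw [aeval_p, mul_zero, zero_mul]

end LeonardSystem

/-- `E*_d E_0 τ*_r(A*) = (φ_1⋯φ_r / η_d(θ_0)) E*_d η_{d-r}(A)`. -/
theorem LeonardSystem.EsdE0_taus {K : Type*} [Field K] {d : ℕ}
    (L : LeonardSystem K d) :
    ∀ r : Fin (d+1),
      L.Estar (Fin.last d) * L.E 0 * L.tausA (r : ℕ) =
        (L.varphiProd (r : ℕ) / L.etaS d (L.θ 0)) •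
          (L.Estar (Fin.last d) * L.etaA (d - (r : ℕ))) := by
  intro r
  refine sub_eq_zero.mp (L.eq_zero_of_mul_tauA_mul_Estar_zero fun i => ?_)
  have taus_side : L.Estar (Fin.last d) * L.E 0 * L.tausA r * L.tauA i * L.Estar 0 =
      L.Estar (Fin.last d) * (L.E 0 * L.tausA r * L.tauA i * L.Estar 0) := by
    simp only [mul_assoc]
  rw [sub_mul, sub_mul, smul_mul_assoc, smul_mul_assoc, taus_side,
    L.E_zero_mul_tausA_mul_tauA_mul_Estar_zero, L.Estar_last_mul_etaA_mul_tauA_mul_Estar_zero]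
  split_ifs
  · rw [mul_smul_comm, ← mul_assoc, smul_smul, div_mul_cancel₀ _ L.etaS_self_ne_zero, sub_self]
  · rw [mul_zero, smul_zero, sub_self]
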